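/- Let (Γ, μ) be a finite measure space and let j : Γ × ℝ^d → ℝ satisfy: (H1) for every ξ ∈ ℝ^d the map x ↦ j(x, ξ) is measurable and j(·, 0) ∈ L¹(Γ, μ); (H2) for μ-a.e. x ∈ Γ the map ξ ↦ j(x, ξ) is locally Lipschitz on ℝ^d; (H3) there exist k₀, k₁ ≥ 0 such that for μ-a.e. x and all ξ ∈ ℝ^d, every η ∈ ∂j(x, ξ) satisfies |η| ≤ k₀ + k₁|ξ|. Then for every v ∈ L²(Γ, μ; ℝ^d) the integral J(v) := ∫_Γ j(x, v(x)) dμ(x) is finite, and the functional J : L²(Γ, μ; ℝ^d) → ℝ is locally Lipschitz. -/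

import Mathlib

open Filter Topology MeasureTheory
open scoped RealInnerProductSpace

/-- The Clarke generalized directional derivative of `f` at `x` in the direction `v`:
`f⁰(x; v) = limsup_{y → x, λ ↓ 0} (f (y + λ v) - f y) / λ`. -/
noncomputable def clarkeDeriv {X : Type*} [NormedAddCommGroup X] [NormedSpace ℝ X]
    (f : X → ℝ) (x v : X) : ℝ :=
  Filter.limsup (fun p : X × ℝ => (f (p.1 + p.2 • v) - f p.1) / p.2)
    ((𝓝 x) ×ˢ (𝓝[>] (0 : ℝ)))

/-- The Clarke subdifferential of `f` at `x`, identified with a subset of the space itself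
via the inner product: `∂f(x) = {η : ⟪η, v⟫ ≤ f⁰(x; v) for all v}`. -/
def clarkeSubdiffInner {X : Type*} [NormedAddCommGroup X] [InnerProductSpace ℝ X]
    (f : X → ℝ) (x : X) : Set X :=
  {η | ∀ v : X, ⟪η, v⟫ ≤ clarkeDeriv f x v}

section helpers

variable {X : Type*} [NormedAddCommGroup X] [NormedSpace ℝ X]

lemma clarke_tendsto (x v : X) :
    Tendsto (fun p : X × ℝ => p.1 + p.2 • v) ((𝓝 x) ×ˢ (𝓝[>] (0 : ℝ))) (𝓝 x) := by
  have h : Tendsto (fun p : X × ℝ => p.1 + p.2 • v) (𝓝 (x, 0)) (𝓝 x) := by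
    have : Continuous (fun p : X × ℝ => p.1 + p.2 • v) := by fun_prop
    simpa using this.tendsto (x, 0)
  refine h.mono_left ?_
  rw [nhds_prod_eq]
  exact Filter.prod_mono le_rfl nhdsWithin_le_nhds

lemma clarke_pos (x : X) : ∀ᶠ p : X × ℝ in (𝓝 x) ×ˢ (𝓝[>] (0 : ℝ)), 0 < p.2 :=
  tendsto_snd.eventually (eventually_mem_nhdsWithin (a := (0 : ℝ)) (s := Set.Ioi 0))

lemma clarke_bdd {f : X → ℝ} (hf : LocallyLipschitz f) (x v : X) :
    ∃ K : ℝ, ∀ᶠ p : X × ℝ in (𝓝 x) ×ˢ (𝓝[>] (0 : ℝ)),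
      |(f (p.1 + p.2 • v) - f p.1) / p.2| ≤ K := by
  obtain ⟨K, t, ht, hK⟩ := hf x
  refine ⟨K * ‖v‖, ?_⟩
  filter_upwards [clarke_tendsto x v ht, tendsto_fst.eventually ht, clarke_pos x] with p h1 h2 h3
  have := hK.dist_le_mul _ h1 _ h2
  rw [Real.dist_eq, dist_eq_norm, add_sub_cancel_left, norm_smul, Real.norm_eq_abs] at this
  rw [abs_div, div_le_iff₀ (abs_pos.2 h3.ne')]
  linarith

lemma clarke_le_iff {f : X → ℝ} (hf : LocallyLipschitz f) (x v : X) (c : ℝ) :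
    clarkeDeriv f x v ≤ c ↔ ∀ y > c, ∀ᶠ p : X × ℝ in (𝓝 x) ×ˢ (𝓝[>] (0 : ℝ)),
      (f (p.1 + p.2 • v) - f p.1) / p.2 < y := by
  obtain ⟨K, hK⟩ := clarke_bdd hf x v
  have hb : IsBoundedUnder (· ≤ ·) ((𝓝 x) ×ˢ (𝓝[>] (0 : ℝ)))
      (fun p : X × ℝ => (f (p.1 + p.2 • v) - f p.1) / p.2) :=
    ⟨K, by rw [eventually_map]; exact hK.mono fun p hp => (abs_le.1 hp).2⟩
  have hb' : IsBoundedUnder (· ≥ ·) ((𝓝 x) ×ˢ (𝓝[>] (0 : ℝ)))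
      (fun p : X × ℝ => (f (p.1 + p.2 • v) - f p.1) / p.2) :=
    ⟨-K, by rw [eventually_map]; exact hK.mono fun p hp => (abs_le.1 hp).1⟩
  exact limsup_le_iff hb'.isCoboundedUnder_le hb

lemma clarke_add {f : X → ℝ} (hf : LocallyLipschitz f) (x v w : X) :
    clarkeDeriv f x (v + w) ≤ clarkeDeriv f x v + clarkeDeriv f x w := by
  rw [clarke_le_iff hf]
  intro y hy
  set ε := (y - (clarkeDeriv f x v + clarkeDeriv f x w)) / 2 with hε
  have h1 := (clarke_le_iff hf x v _).1 le_rfl (clarkeDeriv f x v + ε) (by linarith)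
  have h2 := (clarke_le_iff hf x w _).1 le_rfl (clarkeDeriv f x w + ε) (by linarith)
  have h3 : Tendsto (fun p : X × ℝ => (p.1 + p.2 • v, p.2)) ((𝓝 x) ×ˢ (𝓝[>] (0 : ℝ)))
      ((𝓝 x) ×ˢ (𝓝[>] (0 : ℝ))) := (clarke_tendsto x v).prodMk tendsto_snd
  filter_upwards [h1, h3.eventually h2] with p h1 h2
  have e : (f (p.1 + p.2 • (v + w)) - f p.1) / p.2 = (f (p.1 + p.2 • v) - f p.1) / p.2
      + (f (p.1 + p.2 • v + p.2 • w) - f (p.1 + p.2 • v)) / p.2 := by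
    rw [smul_add, ← add_assoc]; ring
  rw [e]
  linarith

lemma clarke_smul_le {f : X → ℝ} (hf : LocallyLipschitz f) (x : X) (c : ℝ) (hc : 0 < c) (v : X) :
    clarkeDeriv f x (c • v) ≤ c * clarkeDeriv f x v := by
  rw [clarke_le_iff hf]
  intro y hy
  have h1 := (clarke_le_iff hf x v _).1 le_rfl (y / c) (by rw [gt_iff_lt, lt_div_iff₀ hc]; linarith)
  have h4 : Tendsto (fun t : ℝ => c * t) (𝓝[>] (0 : ℝ)) (𝓝[>] (0 : ℝ)) := by
    refine tendsto_nhdsWithin_iff.2 ⟨?_, ?_⟩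
    · have : Continuous (fun t : ℝ => c * t) := by fun_prop
      simpa using (this.tendsto 0).mono_left nhdsWithin_le_nhds
    · filter_upwards [self_mem_nhdsWithin] with t ht
      exact mul_pos hc ht
  have h3 : Tendsto (fun p : X × ℝ => (p.1, c * p.2)) ((𝓝 x) ×ˢ (𝓝[>] (0 : ℝ)))
      ((𝓝 x) ×ˢ (𝓝[>] (0 : ℝ))) := tendsto_fst.prodMk (h4.comp tendsto_snd)
  filter_upwards [h3.eventually h1, clarke_pos x] with p h1 h2
  rw [lt_div_iff₀ hc] at h1
  have e : (f (p.1 + p.2 • c • v) - f p.1) / p.2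
      = (f (p.1 + (c * p.2) • v) - f p.1) / (c * p.2) * c := by
    rw [smul_smul, mul_comm p.2 c]; field_simp
  rwa [e]

lemma clarke_smul {f : X → ℝ} (hf : LocallyLipschitz f) (x : X) (c : ℝ) (hc : 0 < c) (v : X) :
    clarkeDeriv f x (c • v) = c * clarkeDeriv f x v := by
  refine le_antisymm (clarke_smul_le hf x c hc v) ?_
  have := clarke_smul_le hf x c⁻¹ (inv_pos.2 hc) (c • v)
  rw [smul_smul, inv_mul_cancel₀ hc.ne', one_smul, inv_mul_eq_div, le_div_iff₀ hc] at this
  linarith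

end helpers

section helpers2

variable {X : Type*} [NormedAddCommGroup X] [InnerProductSpace ℝ X] [FiniteDimensional ℝ X]

lemma clarke_exists {f : X → ℝ} (hf : LocallyLipschitz f) (x v : X) (hv : v ≠ 0) :
    ∃ η ∈ clarkeSubdiffInner f x, ⟪η, v⟫ = clarkeDeriv f x v := by
  have N0 : clarkeDeriv f x (0 : X) = 0 := by
    have := clarke_smul hf x 2 (by norm_num) 0
    rw [smul_zero] at this
    linarith
  obtain ⟨g, hg1, hg2⟩ := exists_extension_of_le_sublinear
    (LinearPMap.mkSpanSingleton (σ := RingHom.id ℝ) v (clarkeDeriv f x v) hv) (clarkeDeriv f x)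
    (clarke_smul hf x) (clarke_add hf x) (by
      rintro ⟨y, hy⟩
      obtain ⟨t, rfl⟩ := Submodule.mem_span_singleton.1 hy
      rw [LinearPMap.mkSpanSingleton'_apply]
      simp only [RingHom.id_apply, smul_eq_mul]
      rcases lt_trichotomy t 0 with h | h | h
      · have h1 := clarke_smul hf x (-t) (by linarith) v
        have h2 := clarke_add hf x (t • v) ((-t) • v)
        rw [← add_smul, add_neg_cancel, zero_smul, N0, h1] at h2
        linarith
      · simp [h, N0]
      · exact (clarke_smul hf x t h v).ge)
  have hgv : g v = clarkeDeriv f x v := by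
    have := hg1 ⟨v, Submodule.mem_span_singleton_self v⟩
    exact this.trans (LinearPMap.mkSpanSingleton'_apply_self _ _ _ _)
  have hr : ∀ w, ⟪(InnerProductSpace.toDual ℝ X).symm (LinearMap.toContinuousLinearMap g), w⟫
      = g w := fun w => by simp
  refine ⟨(InnerProductSpace.toDual ℝ X).symm (LinearMap.toContinuousLinearMap g), ?_, ?_⟩
  · intro w
    rw [hr]
    exact hg2 w
  · rw [hr, hgv]

lemma clarke_deriv_le {f : X → ℝ} (hf : LocallyLipschitz f) {x : X} {M : ℝ} 
    (hM : ∀ η ∈ clarkeSubdiffInner f x, ‖η‖ ≤ M) {v : X} (hv : v ≠ 0) :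
    clarkeDeriv f x v ≤ M * ‖v‖ := by
  obtain ⟨η, h1, h2⟩ := clarke_exists hf x v hv
  rw [← h2]
  exact (real_inner_le_norm _ _).trans (mul_le_mul_of_nonneg_right (hM η h1) (norm_nonneg _))

lemma clarke_mvt {f : X → ℝ} (hf : LocallyLipschitz f) {k₀ k₁ : ℝ} (hk₁ : 0 ≤ k₁)
    (hM : ∀ ξ, ∀ η ∈ clarkeSubdiffInner f ξ, ‖η‖ ≤ k₀ + k₁ * ‖ξ‖) (a b : X) :
    f b - f a ≤ (k₀ + k₁ * (‖a‖ + ‖b‖)) * ‖b - a‖ := by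
  rcases eq_or_ne b a with rfl | hab
  · simp
  have hv : b - a ≠ 0 := sub_ne_zero.2 hab
  set C := (k₀ + k₁ * (‖a‖ + ‖b‖)) * ‖b - a‖ with hC
  have key := image_le_of_liminf_slope_right_le_deriv_boundary
    (f := fun t : ℝ => f (a + t • (b - a))) (a := 0) (b := 1)
    (B := fun t => f a + t * C) (B' := fun _ => C)
    (by have := hf.continuous; fun_prop) (by simp) (by fun_prop)
    (fun t _ => by
      simpa using (((hasDerivAt_id t).mul_const C).const_add (f a)).hasDerivWithinAt) 
    (by
      intro t ht r hr
      apply Eventually.frequently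
      have hn : ‖a + t • (b - a)‖ ≤ ‖a‖ + ‖b‖ := by
        have e : a + t • (b - a) = (1 - t) • a + t • b := by module
        rw [e]
        refine (norm_add_le _ _).trans ?_
        rw [norm_smul, norm_smul, Real.norm_of_nonneg ht.1, Real.norm_of_nonneg (by linarith [ht.2])]
        nlinarith [ht.1, ht.2, norm_nonneg a, norm_nonneg b]
      have hd : clarkeDeriv f (a + t • (b - a)) (b - a) ≤ C :=
        clarke_deriv_le hf (fun η hη => (hM _ η hη).trans (by gcongr)) hv
      have h1 := (clarke_le_iff hf _ _ _).1 hd r hr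
      have h2 : Tendsto (fun z : ℝ => (a + t • (b - a), z - t)) (𝓝[>] t)
          ((𝓝 (a + t • (b - a))) ×ˢ (𝓝[>] (0 : ℝ))) := by
        refine tendsto_const_nhds.prodMk (tendsto_nhdsWithin_iff.2 ⟨?_, ?_⟩)
        · have : Continuous (fun z : ℝ => z - t) := by fun_prop
          simpa using (this.tendsto t).mono_left nhdsWithin_le_nhds
        · filter_upwards [self_mem_nhdsWithin] with z hz
          exact Set.mem_Ioi.2 (sub_pos.2 (Set.mem_Ioi.1 hz))
      filter_upwards [h2.eventually h1] with z hz
      rw [slope_def_field]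
      have e : a + t • (b - a) + (z - t) • (b - a) = a + z • (b - a) := by module
      rwa [e] at hz)
  have := key (x := 1) (by simp)
  simp only [one_smul, one_mul, add_sub_cancel] at this
  linarith

lemma clarke_mvt_abs {f : X → ℝ} (hf : LocallyLipschitz f) {k₀ k₁ : ℝ} (hk₁ : 0 ≤ k₁)
    (hM : ∀ ξ, ∀ η ∈ clarkeSubdiffInner f ξ, ‖η‖ ≤ k₀ + k₁ * ‖ξ‖) (a b : X) :
    |f a - f b| ≤ (k₀ + k₁ * (‖a‖ + ‖b‖)) * ‖a - b‖ := by
  have h1 := clarke_mvt hf hk₁ hM a b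
  have h2 := clarke_mvt hf hk₁ hM b a
  rw [norm_sub_rev, ] at h1
  rw [add_comm ‖b‖] at h2
  rw [abs_le]
  constructor <;> linarith

end helpers2

lemma caratheodory_aesm {Γ : Type*} [MeasurableSpace Γ] {μ : Measure Γ} {d : ℕ}
    {j : Γ → EuclideanSpace ℝ (Fin d) → ℝ}
    (hmeas : ∀ ξ : EuclideanSpace ℝ (Fin d), Measurable (fun x => j x ξ))
    (hc : ∀ᵐ x ∂μ, Continuous (j x)) {v : Γ → EuclideanSpace ℝ (Fin d)}
    (hv : AEStronglyMeasurable v μ) : AEStronglyMeasurable (fun x => j x (v x)) μ := by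
  classical
  obtain ⟨s, hs, hsm, hs0⟩ := exists_measurable_superset_of_null (ae_iff.1 hc)
  have h := measurable_uncurry_of_continuous_of_measurable
    (u := fun ξ x => if x ∈ s then 0 else j x ξ)
    (fun x => by
      by_cases hx : x ∈ s
      · simpa [hx] using continuous_const
      · simp only [hx, if_false]
        by_contra h
        exact hx (hs h))
    (fun ξ => Measurable.ite hsm measurable_const (hmeas ξ))
  refine ⟨fun x => Function.uncurry (fun ξ x => if x ∈ s then 0 else j x ξ) (hv.mk v x, x),
    (h.comp (hv.stronglyMeasurable_mk.measurable.prodMk measurable_id)).stronglyMeasurable, ?_⟩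
  have : ∀ᵐ x ∂μ, x ∉ s := measure_eq_zero_iff_ae_notMem.1 hs0
  filter_upwards [this, hv.ae_eq_mk] with x h1 h2
  simp [h1, ← h2]

/-- Under (H1)–(H3), the functional `J(v) = ∫ j(x, v(x)) dμ` is well defined (the integrand
is integrable for every `v ∈ L²(Γ, μ; ℝ^d)`) and `J` is locally Lipschitz on
`L²(Γ, μ; ℝ^d)`. -/
theorem integral_functional_locallyLipschitz {d : ℕ}
    {Γ : Type*} [MeasurableSpace Γ] (μ : Measure Γ) [IsFiniteMeasure μ]
    (j : Γ → EuclideanSpace ℝ (Fin d) → ℝ)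
    (hmeas : ∀ ξ : EuclideanSpace ℝ (Fin d), Measurable (fun x => j x ξ))
    (hint0 : Integrable (fun x => j x 0) μ)
    (hlip : ∀ᵐ x ∂μ, LocallyLipschitz (j x))
    (k₀ k₁ : ℝ) (hk₀ : 0 ≤ k₀) (hk₁ : 0 ≤ k₁)
    (hgrowth : ∀ᵐ x ∂μ, ∀ ξ : EuclideanSpace ℝ (Fin d),
      ∀ η ∈ clarkeSubdiffInner (j x) ξ, ‖η‖ ≤ k₀ + k₁ * ‖ξ‖) :
    (∀ v : Lp (EuclideanSpace ℝ (Fin d)) 2 μ, Integrable (fun x => j x (v x)) μ) ∧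
    LocallyLipschitz
      (fun v : Lp (EuclideanSpace ℝ (Fin d)) 2 μ => ∫ x, j x (v x) ∂μ) := by
  have hbd : ∀ᵐ x ∂μ, ∀ a b, |j x a - j x b| ≤ (k₀ + k₁ * (‖a‖ + ‖b‖)) * ‖a - b‖ := by
    filter_upwards [hlip, hgrowth] with x h1 h2 a b
    exact clarke_mvt_abs h1 hk₁ h2 a b
  have hnorm : ∀ v : Lp (EuclideanSpace ℝ (Fin d)) 2 μ, MemLp (fun x => ‖v x‖) 2 μ :=
    fun v => (Lp.memLp v).norm
  have hone : MemLp (fun _ : Γ => (1 : ℝ)) 2 μ := memLp_const 1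
  have hG : ∀ u v : Lp (EuclideanSpace ℝ (Fin d)) 2 μ, ∃ g : Lp ℝ 2 μ, 
      ‖g‖ ≤ k₀ * ‖hone.toLp‖ + k₁ * (‖u‖ + ‖v‖) ∧
      ∀ᵐ x ∂μ, g x = k₀ + k₁ * (‖u x‖ + ‖v x‖) := by
    intro u v
    have hn : ∀ w : Lp (EuclideanSpace ℝ (Fin d)) 2 μ, ‖(hnorm w).toLp‖ = ‖w‖ := fun w => by
      rw [Lp.norm_toLp, eLpNorm_norm, Lp.norm_def]
    refine ⟨k₀ • hone.toLp + k₁ • ((hnorm u).toLp + (hnorm v).toLp), ?_, ?_⟩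
    · refine (norm_add_le _ _).trans ?_
      rw [norm_smul, norm_smul, Real.norm_of_nonneg hk₀, Real.norm_of_nonneg hk₁]
      gcongr
      refine (norm_add_le _ _).trans ?_
      rw [hn, hn]
    · filter_upwards [Lp.coeFn_add (k₀ • hone.toLp) (k₁ • ((hnorm u).toLp + (hnorm v).toLp)),
        Lp.coeFn_smul k₀ hone.toLp, Lp.coeFn_smul k₁ ((hnorm u).toLp + (hnorm v).toLp),
        Lp.coeFn_add (hnorm u).toLp (hnorm v).toLp, hone.coeFn_toLp, (hnorm u).coeFn_toLp,
        (hnorm v).coeFn_toLp] with x h1 h2 h3 h4 h5 h6 h7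
      rw [h1, Pi.add_apply, h2, h3, Pi.smul_apply, Pi.smul_apply, h4, Pi.add_apply, h5, h6, h7]
      simp
  have hmain : ∀ u v : Lp (EuclideanSpace ℝ (Fin d)) 2 μ,
      Integrable (fun x => (k₀ + k₁ * (‖u x‖ + ‖v x‖)) * ‖u x - v x‖) μ ∧
      ∫ x, (k₀ + k₁ * (‖u x‖ + ‖v x‖)) * ‖u x - v x‖ ∂μ
        ≤ (k₀ * ‖hone.toLp‖ + k₁ * (‖u‖ + ‖v‖)) * ‖u - v‖ := by
    intro u v
    obtain ⟨g, hg1, hg2⟩ := hG u v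
    have hn : ‖(hnorm (u - v)).toLp‖ = ‖u - v‖ := by
      rw [Lp.norm_toLp, eLpNorm_norm, Lp.norm_def]
    have e : (fun x => ⟪g x, ((hnorm (u - v)).toLp _ : Lp ℝ 2 μ) x⟫) =ᵐ[μ]
        fun x => (k₀ + k₁ * (‖u x‖ + ‖v x‖)) * ‖u x - v x‖ := by
      filter_upwards [hg2, (hnorm (u - v)).coeFn_toLp, Lp.coeFn_sub u v] with x h1 h2 h3
      rw [h1, h2, h3, Pi.sub_apply]
      simp [mul_comm]
    refine ⟨(L2.integrable_inner (𝕜 := ℝ) g (hnorm (u - v)).toLp).congr e, ?_⟩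
    rw [← integral_congr_ae e, ← L2.inner_def (𝕜 := ℝ)]
    refine (real_inner_le_norm _ _).trans ?_
    rw [hn]
    gcongr
  have hsm : ∀ v : Lp (EuclideanSpace ℝ (Fin d)) 2 μ,
      AEStronglyMeasurable (fun x => j x (v x)) μ := fun v =>
    caratheodory_aesm hmeas (hlip.mono fun x hx => hx.continuous) (Lp.aestronglyMeasurable v)
  have hint : ∀ v : Lp (EuclideanSpace ℝ (Fin d)) 2 μ, Integrable (fun x => j x (v x)) μ := by
    intro v
    have h1 : Integrable (fun x => j x (v x) - j x 0) μ := by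
      refine (hmain v 0).1.mono' ((hsm v).sub hint0.aestronglyMeasurable) ?_
      filter_upwards [hbd, Lp.coeFn_zero (EuclideanSpace ℝ (Fin d)) 2 μ] with x h1 h2
      rw [h2]
      exact h1 (v x) 0
    refine (h1.add hint0).congr (Eventually.of_forall fun x => ?_)
    simp
  refine ⟨hint, fun w => ?_⟩
  refine ⟨(k₀ * ‖hone.toLp‖ + k₁ * ((‖w‖ + 1) + (‖w‖ + 1))).toNNReal, Metric.ball w 1,
    Metric.ball_mem_nhds w one_pos, LipschitzOnWith.of_dist_le_mul fun u hu v hv => ?_⟩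
  have hb : ∀ z ∈ Metric.ball w 1, ‖z‖ ≤ ‖w‖ + 1 := by
    intro z hz
    rw [mem_ball_iff_norm] at hz
    have := norm_le_norm_add_norm_sub' z w
    linarith
  have hu' := hb u hu
  have hv' := hb v hv
  rw [Real.coe_toNNReal _ (by positivity), Real.dist_eq, dist_eq_norm,
    ← integral_sub (hint u) (hint v)]
  calc |∫ x, (j x (u x) - j x (v x)) ∂μ|
      ≤ ∫ x, (k₀ + k₁ * (‖u x‖ + ‖v x‖)) * ‖u x - v x‖ ∂μ := by
        rw [← Real.norm_eq_abs]
        refine norm_integral_le_of_norm_le (hmain u v).1 ?_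
        filter_upwards [hbd] with x hx
        exact hx _ _
    _ ≤ (k₀ * ‖hone.toLp‖ + k₁ * (‖u‖ + ‖v‖)) * ‖u - v‖ := (hmain u v).2
    _ ≤ _ := by gcongr
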